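/- For every integer k ≥ 1 and every real c with 0 < c < 2^k, the function s ↦ c^s P_k(s) is strictly decreasing on (1, ∞). -/

import Mathlib

open MeasureTheory Real

/-- The prime zeta function `P(s) = ∑_p p^{-s}` (sum over all primes). -/
noncomputable def primeZeta (s : ℝ) : ℝ := ∑' p : Nat.Primes, (p.1 : ℝ) ^ (-s)

/-- The set of `k`-almost primes: positive integers with exactly `k` prime
factors counted with multiplicity. -/
def almostPrimes (k : ℕ) : Set ℕ := {n | 0 < n ∧ n.primeFactorsList.length = k}

/-- `P_k(s) = ∑_{n ∈ N_k} n^{-s}`; note `P_0(s) = 1` since `N_0 = {1}`. -/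
noncomputable def Pk (k : ℕ) (s : ℝ) : ℝ := ∑' n : almostPrimes k, (n.1 : ℝ) ^ (-s)

/-- Translated sum `f(A, h) = ∑_{a ∈ A} 1/(a (log a + h))`. -/
noncomputable def transSum (A : Set ℕ) (h : ℝ) : ℝ :=
  ∑' a : A, 1 / ((a.1 : ℝ) * (Real.log a.1 + h))

theorem aux_list : ∀ l : List ℕ, (∀ p ∈ l, 2 ≤ p) → 2 ^ l.length ≤ l.prod
  | [], _ => by simp
  | a :: l, h => by
    have h1 := aux_list l (fun p hp => h p (by simp [hp]))
    have h2 := h a (by simp)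
    rw [List.length_cons, List.prod_cons, pow_succ, mul_comm]
    exact Nat.mul_le_mul h2 h1

theorem aux_le {k n : ℕ} (h : n ∈ almostPrimes k) : 2 ^ k ≤ n := by
  obtain ⟨h0, h1⟩ := h
  have := aux_list n.primeFactorsList
    (fun p hp => (Nat.prime_of_mem_primeFactorsList hp).two_le)
  rwa [h1, Nat.prod_primeFactorsList h0.ne'] at this

theorem aux_summable (k : ℕ) (s : ℝ) (hs : 1 < s) :
    Summable (fun n : almostPrimes k => (n.1 : ℝ) ^ (-s)) := by
  have : Summable (fun n : ℕ => (n : ℝ) ^ (-s)) := Real.summable_nat_rpow.2 (by linarith)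
  exact this.subtype _

theorem aux_two (k : ℕ) : 2 ^ k ∈ almostPrimes k :=
  ⟨by positivity, by rw [Nat.Prime.primeFactorsList_pow Nat.prime_two]; simp⟩

/-- For every `k ≥ 1` and real `0 < c < 2^k`, the function `s ↦ c^s P_k(s)`
is strictly decreasing on `(1, ∞)`. -/
theorem stmt_12 (k : ℕ) (hk : 1 ≤ k) (c : ℝ) (hc : 0 < c) (hc2 : c < 2 ^ k) :
    StrictAntiOn (fun s : ℝ => c ^ s * Pk k s) (Set.Ioi 1) := by
  intro s hs t ht hst
  have key : ∀ n : almostPrimes k, c ^ t * (n.1 : ℝ) ^ (-t) < c ^ s * (n.1 : ℝ) ^ (-s) := by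
    intro n
    have hn : (2 : ℝ) ^ k ≤ n.1 := by exact_mod_cast aux_le n.2
    have hn0 : (0 : ℝ) < n.1 := lt_of_lt_of_le (by positivity) hn
    have e : ∀ u : ℝ, c ^ u * (n.1 : ℝ) ^ (-u) = (c / n.1) ^ u := by
      intro u
      rw [Real.div_rpow hc.le hn0.le, Real.rpow_neg hn0.le, div_eq_mul_inv]
    rw [e, e]
    exact Real.rpow_lt_rpow_of_exponent_gt (by positivity)
      ((div_lt_one hn0).2 (lt_of_lt_of_le hc2 hn)) hst
  simp only [Pk]
  rw [← tsum_mul_left, ← tsum_mul_left]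
  exact Summable.tsum_lt_tsum (i := ⟨2 ^ k, aux_two k⟩) (fun n => (key n).le) (key _)
    ((aux_summable k t ht).mul_left _) ((aux_summable k s hs).mul_left _)
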